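/- Let q be an integer with q ≥ 3 and let A ⊂ ℚ be a finite set with #A ≥ 2 such that s := dim_H K(q,A) < 1. Then there exists a constant c₁ > 0 such that every rational number ξ = v/u ∈ K(q,A), with u ∈ ℕ, v ∈ ℤ and gcd(v,u) = 1, admits an eventually periodic coding with period length at most c₁ u^s; that is, there exist a sequence (a_i)_{i≥1} with all a_i ∈ A, an integer j ≥ 0, and an integer n with 1 ≤ n ≤ c₁ u^s, such that ξ = ∑_{i=1}^∞ a_i/q^i and a_{i+n} = a_i for all i > j. -/

import Mathlib

open MeasureTheory

/-- The self-similar set `K(q,A) = { ∑_{i=1}^∞ a_i/q^i : a_i ∈ A }`. -/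
noncomputable def Kset (q : ℕ) (A : Finset ℚ) : Set ℝ :=
  { x : ℝ | ∃ a : ℕ → ℚ, (∀ i, a i ∈ A) ∧ x = ∑' i : ℕ, (a i : ℝ) / (q : ℝ) ^ (i + 1) }

/-!
Scaling by a common denominator makes the digits integers. The tails of a coding of `ξ = z/u` have
values of the form `y/u` in the self-similar set, so once two tails agree, looping between them
gives a periodic coding whose period is at most the number of such points. Choose `n` with
`u ≤ qⁿ ≤ q u`. Each admissible `y` is within a bounded distance of `u d / qⁿ` for the value `d` of
a word of length `n`, so it remains to count word values. Among them a positive proportion lies in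
one residue class modulo a large constant; taken as digits in base `qⁿ`, these satisfy strong
separation and generate a Cantor subset. Its dimension is at most `s`, so there are at most
`O(q^(ns)) = O(u^s)` word values.
-/

open Set
open scoped NNReal ENNReal

namespace DigitExpansion

section Expansion

/-- The value `∑ bᵢ / β^(i+1)` of a digit sequence in base `β`; digits are indexed from `0`. -/
noncomputable def expansion (β : ℝ) (b : ℕ → ℝ) : ℝ :=
  ∑' i, b i / β ^ (i + 1)

variable {β R : ℝ} {b : ℕ → ℝ}

lemma hasSum_of_orbit (hβ : 1 < β) {y : ℕ → ℝ} {C : ℝ} (hC : ∀ k, |y k| ≤ C)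
    (hy : ∀ k, y (k + 1) = β * y k - b k) : HasSum (fun i ↦ b i / β ^ (i + 1)) (y 0) := by
  have hβ0 : 0 < β := one_pos.trans hβ
  have hsum : Summable fun i ↦ y i / β ^ i := by
    refine .of_norm_bounded
      ((summable_geometric_of_lt_one (inv_nonneg.2 hβ0.le) (inv_lt_one_of_one_lt₀ hβ)).mul_left C)
      fun i ↦ ?_
    rw [norm_div, Real.norm_eq_abs, norm_pow, Real.norm_of_nonneg hβ0.le, inv_pow, div_eq_mul_inv]
    gcongr
    exact hC i
  have htelescope : ∀ i, b i / β ^ (i + 1) = y i / β ^ i - y (i + 1) / β ^ (i + 1) := fun i ↦ by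
    rw [hy]
    field_simp
    ring
  simpa [htelescope] using hsum.hasSum.sub ((hasSum_nat_add_iff' 1).2 hsum.hasSum)

lemma hasSum_const_digit (hβ : 1 < β) (R : ℝ) : HasSum (fun i ↦ R * (β - 1) / β ^ (i + 1)) R :=
  hasSum_of_orbit (y := fun _ ↦ R) hβ (fun _ ↦ le_rfl) fun _ ↦ by ring

lemma norm_digit_div_le (hβ : 1 < β) (hb : ∀ i, |b i| ≤ R * (β - 1)) (i : ℕ) :
    ‖b i / β ^ (i + 1)‖ ≤ R * (β - 1) / β ^ (i + 1) := by
  have hβ0 : 0 < β := one_pos.trans hβ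
  rw [norm_div, Real.norm_eq_abs, norm_pow, Real.norm_of_nonneg hβ0.le]
  gcongr
  exact hb i

lemma abs_expansion_le (hβ : 1 < β) (hb : ∀ i, |b i| ≤ R * (β - 1)) : |expansion β b| ≤ R :=
  tsum_of_norm_bounded (hasSum_const_digit hβ R) (norm_digit_div_le hβ hb)

lemma expansion_tail (hβ : 1 < β) (hb : ∀ i, |b i| ≤ R * (β - 1)) :
    expansion β (fun i ↦ b (i + 1)) = β * expansion β b - b 0 := by
  have hβ0 : β ≠ 0 := (one_pos.trans hβ).ne'
  have hsum := Summable.of_norm_bounded (hasSum_const_digit hβ R).summable (norm_digit_div_le hβ hb)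
  rw [expansion, expansion, hsum.tsum_eq_zero_add, mul_add, ← tsum_mul_left, zero_add, pow_one,
    mul_div_cancel₀ _ hβ0, add_sub_cancel_left]
  refine tsum_congr fun i ↦ ?_
  rw [pow_succ β (i + 1)]
  field_simp

lemma expansion_tail_succ (hβ : 1 < β) (hb : ∀ i, |b i| ≤ R * (β - 1)) (k : ℕ) :
    expansion β (fun i ↦ b (i + (k + 1))) = β * expansion β (fun i ↦ b (i + k)) - b k := by
  simpa only [add_assoc, add_comm 1 k, zero_add] using
    expansion_tail (b := fun i ↦ b (i + k)) hβ fun i ↦ hb _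

lemma expansion_const_mul (β r : ℝ) (b : ℕ → ℝ) :
    expansion β (fun i ↦ r * b i) = r * expansion β b := by
  simp only [expansion, mul_div_assoc, tsum_mul_left]

/- The gap `2R + 1` in the first differing digit outweighs the tails, at most `R` each. -/
lemma one_le_pow_mul_abs_expansion_sub (hβ : 1 < β) {e f : ℕ → ℝ}
    (he : ∀ i, |e i| ≤ R * (β - 1)) (hf : ∀ i, |f i| ≤ R * (β - 1)) {m : ℕ}
    (heq : ∀ i < m, e i = f i) (hgap : 2 * R + 1 ≤ |e m - f m|) :
    1 ≤ β ^ (m + 1) * |expansion β e - expansion β f| := by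
  have hβ0 : 0 < β := one_pos.trans hβ
  induction m generalizing e f with
  | zero =>
    have hsplit : e 0 - f 0 = β * (expansion β e - expansion β f) -
        (expansion β (fun i ↦ e (i + 1)) - expansion β (fun i ↦ f (i + 1))) := by
      rw [expansion_tail hβ he, expansion_tail hβ hf]
      ring
    have htails : |expansion β (fun i ↦ e (i + 1)) - expansion β (fun i ↦ f (i + 1))| ≤ R + R :=
      (abs_sub _ _).trans
        (add_le_add (abs_expansion_le hβ fun i ↦ he _) (abs_expansion_le hβ fun i ↦ hf _))
    have htriangle := abs_sub (β * (expansion β e - expansion β f))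
      (expansion β (fun i ↦ e (i + 1)) - expansion β (fun i ↦ f (i + 1)))
    rw [← hsplit, abs_mul, abs_of_pos hβ0] at htriangle
    rw [zero_add, pow_one]
    linarith
  | succ m ih =>
    have htail := ih (e := fun i ↦ e (i + 1)) (f := fun i ↦ f (i + 1)) (fun i ↦ he _)
      (fun i ↦ hf _) (fun i hi ↦ heq _ (Nat.succ_lt_succ hi)) hgap
    rwa [expansion_tail hβ he, expansion_tail hβ hf, heq 0 m.succ_pos, sub_sub_sub_cancel_right,
      ← mul_sub, abs_mul, abs_of_pos hβ0, ← mul_assoc, ← pow_succ] at htail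

end Expansion

section Words

/-- The integer `b₀ q^(n-1) + ⋯ + bₙ₋₁` with base-`q` digit string `b₀ … bₙ₋₁`, most significant
digit first. -/
def prefixValue (q : ℕ) (b : ℕ → ℤ) : ℕ → ℤ
  | 0 => 0
  | n + 1 => q * prefixValue q b n + b n

/-- The values of the words of length `n` over `B`; words are extended to infinite sequences. -/
def prefixValues (q : ℕ) (B : Set ℤ) (n : ℕ) : Set ℤ :=
  {d | ∃ b : ℕ → ℤ, (∀ i, b i ∈ B) ∧ prefixValue q b n = d}

/-- The self-similar set of all base-`β` expansions with digits in `B`, that is, `K(β, B)` for a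
real base and integer digits. -/
def expansionSet (β : ℝ) (B : Set ℤ) : Set ℝ :=
  {x | ∃ b : ℕ → ℤ, (∀ i, b i ∈ B) ∧ expansion β (fun i ↦ b i) = x}

lemma expansionSet_mono (β : ℝ) {B C : Set ℤ} (h : B ⊆ C) :
    expansionSet β B ⊆ expansionSet β C :=
  fun _ ⟨b, hb, hx⟩ ↦ ⟨b, fun i ↦ h (hb i), hx⟩

lemma prefixValue_congr (q : ℕ) {b c : ℕ → ℤ} {n : ℕ} (h : ∀ i < n, b i = c i) :
    prefixValue q b n = prefixValue q c n := by
  induction n with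
  | zero => rfl
  | succ n ih => rw [prefixValue, prefixValue, ih fun i hi ↦ h i (hi.trans n.lt_succ_self),
      h n n.lt_succ_self]

variable {q W : ℕ} {B : Set ℤ} {b : ℕ → ℤ}

lemma abs_prefixValue_le (hb : ∀ i, |b i| ≤ W * ((q : ℤ) - 1)) (n : ℕ) :
    |prefixValue q b n| ≤ W * ((q : ℤ) ^ n - 1) := by
  induction n with
  | zero => simp [prefixValue]
  | succ n ih =>
    calc |q * prefixValue q b n + b n|
        ≤ q * |prefixValue q b n| + |b n| := by
          simpa only [abs_mul, Nat.abs_cast] using abs_add_le (q * prefixValue q b n) (b n)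
      _ ≤ q * (W * ((q : ℤ) ^ n - 1)) + W * ((q : ℤ) - 1) := by gcongr; exact hb n
      _ = W * ((q : ℤ) ^ (n + 1) - 1) := by ring

lemma abs_le_of_mem_prefixValues (hB : ∀ d ∈ B, |d| ≤ W * ((q : ℤ) - 1)) {n : ℕ} {d : ℤ}
    (hd : d ∈ prefixValues q B n) : |d| ≤ W * ((q : ℤ) ^ n - 1) := by
  obtain ⟨b, hb, rfl⟩ := hd
  exact abs_prefixValue_le (fun i ↦ hB _ (hb i)) n

lemma finite_prefixValues (hB : ∀ d ∈ B, |d| ≤ W * ((q : ℤ) - 1)) (n : ℕ) :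
    (prefixValues q B n).Finite :=
  (finite_Icc _ _).subset fun _ hd ↦ abs_le.1 (abs_le_of_mem_prefixValues hB hd)

lemma expansion_tail_eq_sub_prefixValue (hq : 1 < q) (hb : ∀ i, |b i| ≤ W * ((q : ℤ) - 1))
    (n : ℕ) : expansion q (fun i ↦ b (i + n)) =
      (q : ℝ) ^ n * expansion q (fun i ↦ b i) - prefixValue q b n := by
  induction n with
  | zero => simp [prefixValue]
  | succ n ih =>
    rw [expansion_tail_succ (R := W) (b := fun i ↦ b i) (mod_cast hq) (fun i ↦ mod_cast hb i) n, ih,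
      prefixValue]
    push_cast
    ring

lemma expansionSet_prefixValues_subset (hq : 1 < q) (hB : ∀ d ∈ B, |d| ≤ W * ((q : ℤ) - 1))
    {n : ℕ} (hn : n ≠ 0) :
    expansionSet ((q : ℝ) ^ n) (prefixValues q B n) ⊆ expansionSet q B := by
  rintro _ ⟨e, he, rfl⟩
  choose w hw hwe using he
  let b : ℕ → ℤ := fun j ↦ w (j / n) (j % n)
  have hb : ∀ j, |b j| ≤ W * ((q : ℤ) - 1) := fun j ↦ hB _ (hw _ _)
  have hblock : ∀ k, prefixValue q (fun i ↦ b (i + n * k)) n = e k := fun k ↦ by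
    rw [← hwe k]
    refine prefixValue_congr q fun i hi ↦ ?_
    simp only [b, Nat.add_mul_div_left _ _ (Nat.pos_of_ne_zero hn), Nat.div_eq_of_lt hi, zero_add,
      Nat.add_mul_mod_self_left, Nat.mod_eq_of_lt hi]
  have horbit : ∀ k, expansion q (fun i ↦ b (i + n * (k + 1))) =
      (q : ℝ) ^ n * expansion q (fun i ↦ b (i + n * k)) - e k := fun k ↦ by
    rw [← hblock k, ← expansion_tail_eq_sub_prefixValue hq (fun i ↦ hb _) n]
    simp only [mul_add, mul_one, add_assoc, add_comm n]
  refine ⟨b, fun j ↦ hw _ _, (HasSum.tsum_eq ?_).symm⟩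
  exact hasSum_of_orbit (y := fun k ↦ expansion q fun i ↦ b (i + n * k)) (C := W)
    (one_lt_pow₀ (mod_cast hq) hn)
    (fun k ↦ abs_expansion_le (mod_cast hq) fun i ↦ mod_cast hb _) horbit

end Words

section Dimension

lemma dimH_range_le_div_of_edist_le {ι X Y : Type*} [EMetricSpace X] [EMetricSpace Y]
    {f : ι → Y} {g : ι → X} {C r : ℝ≥0} (hr : 0 < r)
    (h : ∀ i j, edist (f i) (f j) ≤ C * edist (g i) (g j) ^ (r : ℝ)) :
    dimH (range f) ≤ dimH (range g) / r := by
  cases isEmpty_or_nonempty ι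
  · simp [range_eq_empty f]
  have hfactors : f.FactorsThrough g := fun i j hij ↦ by
    simpa [hij, hr] using h i j
  let F : X → Y := Function.extend g f fun _ ↦ f (Classical.arbitrary ι)
  have hF : ∀ i, F (g i) = f i := fun i ↦ hfactors.extend_apply _ i
  have hHolder : HolderOnWith C r F (range g) := by
    rintro _ ⟨i, rfl⟩ _ ⟨j, rfl⟩
    simpa only [hF] using h i j
  simpa only [← range_comp, Function.comp_def, hF] using hHolder.dimH_image_le hr

lemma one_le_dimH_range_ofDigits {k : ℕ} (hk : 1 < k) :
    1 ≤ dimH (range (Real.ofDigits (b := k))) := by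
  have hIcc : dimH (Icc (0 : ℝ) 1) = 1 := by
    rw [Real.dimH_of_nonempty_interior (by simp), Module.finrank_self, Nat.cast_one]
  rw [← hIcc, ← image_univ]
  exact dimH_mono (Real.ofDigits_SurjOn hk)

/- `logb β k` is the dimension of a Cantor set with `k` maps of ratio `β⁻¹`. -/
lemma abs_ofDigits_sub_le_mul_rpow {β δ : ℝ} (hβ : 1 < β) {k : ℕ} (hk : 1 < k)
    {σ τ : ℕ → Fin k} (hδ : 0 ≤ δ)
    (hsep : ∀ m, (∀ i < m, σ i = τ i) → σ m ≠ τ m → 1 ≤ β ^ (m + 1) * δ) :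
    |Real.ofDigits σ - Real.ofDigits τ| ≤ k * δ ^ Real.logb β k := by
  classical
  have hβ0 : 0 < β := one_pos.trans hβ
  have hk1 : (1 : ℝ) < k := mod_cast hk
  by_cases hστ : σ = τ
  · rw [hστ, sub_self, abs_zero]
    positivity
  have hdiff : ∃ m, σ m ≠ τ m := Function.ne_iff.1 hστ
  obtain ⟨m, hm, hmin⟩ : ∃ m, σ m ≠ τ m ∧ ∀ i < m, σ i = τ i :=
    ⟨Nat.find hdiff, Nat.find_spec hdiff, fun i hi ↦ not_not.1 (Nat.find_min hdiff hi)⟩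
  have hscale : 1 ≤ (k : ℝ) ^ (m + 1) * δ ^ Real.logb β k := by
    calc (1 : ℝ) ≤ (β ^ (m + 1) * δ) ^ Real.logb β k :=
          Real.one_le_rpow (hsep m hmin hm) (Real.logb_pos hβ hk1).le
      _ = (k : ℝ) ^ (m + 1) * δ ^ Real.logb β k := by
          rw [Real.mul_rpow (by positivity) hδ, ← Real.rpow_pow_comm hβ0.le,
            Real.rpow_logb hβ0 hβ.ne' (by positivity)]
  calc |Real.ofDigits σ - Real.ofDigits τ| ≤ ((k : ℝ) ^ m)⁻¹ :=
        Real.abs_ofDigits_sub_ofDigits_le hmin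
    _ ≤ k * δ ^ Real.logb β k := by
        rw [inv_le_iff_one_le_mul₀' (by positivity), ← mul_assoc, ← pow_succ]
        exact hscale

lemma logb_card_le_dimH_expansionSet {β R : ℝ} (hβ : 1 < β) {E : Finset ℤ} (hcard : 1 < E.card)
    (hE : ∀ d ∈ E, |(d : ℝ)| ≤ R * (β - 1))
    (hsep : ∀ d ∈ E, ∀ d' ∈ E, d ≠ d' → 2 * R + 1 ≤ |(d : ℝ) - d'|) :
    Real.logb β E.card ≤ (dimH (expansionSet β E)).toReal := by
  let ε : Fin E.card → E := E.equivFin.symm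
  let g : (ℕ → Fin E.card) → ℝ := fun σ ↦ expansion β fun i ↦ (ε (σ i) : ℤ)
  have ht0 : 0 < Real.logb β E.card := Real.logb_pos hβ (mod_cast hcard)
  obtain ⟨t, ht⟩ : ∃ t : ℝ≥0, (t : ℝ) = Real.logb β E.card := ⟨⟨_, ht0.le⟩, rfl⟩
  have ht_pos : 0 < t := NNReal.coe_pos.1 (ht ▸ ht0)
  have hdist : ∀ σ τ, edist (Real.ofDigits σ) (Real.ofDigits τ) ≤
      (E.card : ℝ≥0) * edist (g σ) (g τ) ^ (t : ℝ) := fun σ τ ↦ by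
    have hreal := abs_ofDigits_sub_le_mul_rpow (σ := σ) (τ := τ) hβ hcard (abs_nonneg (g σ - g τ))
      fun m hlt hm ↦ one_le_pow_mul_abs_expansion_sub hβ (fun i ↦ hE _ (ε (σ i)).2)
        (fun i ↦ hE _ (ε (τ i)).2) (fun i hi ↦ by rw [hlt i hi])
        (hsep _ (ε (σ m)).2 _ (ε (τ m)).2 fun h ↦ hm (E.equivFin.symm.injective (Subtype.ext h)))
    rw [edist_dist, edist_dist, Real.dist_eq, Real.dist_eq, ht,
      ENNReal.ofReal_rpow_of_nonneg (abs_nonneg _) ht0.le, ← ENNReal.ofReal_coe_nnreal,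
      ← ENNReal.ofReal_mul (by positivity)]
    exact ENNReal.ofReal_le_ofReal hreal
  have hrange : range g ⊆ expansionSet β E := by
    rintro _ ⟨σ, rfl⟩
    exact ⟨fun i ↦ ε (σ i), fun i ↦ (ε (σ i)).2, rfl⟩
  have hdim : (t : ℝ≥0∞) ≤ dimH (expansionSet β E) := by
    have hle := (one_le_dimH_range_ofDigits hcard).trans
      (dimH_range_le_div_of_edist_le ht_pos hdist)
    rw [ENNReal.le_div_iff_mul_le (by simp [ht_pos.ne']) (by simp), one_mul] at hle
    exact hle.trans (dimH_mono hrange)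
  simpa only [ENNReal.coe_toReal, ht] using ENNReal.toReal_mono (Real.dimH_ne_top _) hdim

lemma card_le_rpow_dimH_expansionSet {β R : ℝ} (hβ : 1 < β) {E : Finset ℤ}
    (hE : ∀ d ∈ E, |(d : ℝ)| ≤ R * (β - 1))
    (hsep : ∀ d ∈ E, ∀ d' ∈ E, d ≠ d' → 2 * R + 1 ≤ |(d : ℝ) - d'|) :
    (E.card : ℝ) ≤ β ^ (dimH (expansionSet β E)).toReal := by
  rcases le_or_gt E.card 1 with hcard | hcard
  · exact (Nat.cast_le_one.2 hcard).trans (Real.one_le_rpow hβ.le ENNReal.toReal_nonneg)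
  · exact (Real.logb_le_iff_le_rpow hβ (mod_cast one_pos.trans hcard)).1
      (logb_card_le_dimH_expansionSet hβ hcard hE hsep)

end Dimension

section Counting

lemma exists_separated_subset (D : Finset ℤ) {M : ℕ} (hM : 0 < M) :
    ∃ E ⊆ D, D.card ≤ M * E.card ∧ ∀ d ∈ E, ∀ d' ∈ E, d ≠ d' → (M : ℤ) ≤ |d - d'| := by
  classical
  have : NeZero M := ⟨hM.ne'⟩
  obtain ⟨r, -, hr⟩ : ∃ r ∈ (Finset.univ : Finset (ZMod M)),
      (D.card : ℚ) / M ≤ (D.filter fun d : ℤ ↦ (d : ZMod M) = r).card := by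
    refine Finset.exists_le_card_fiber_of_nsmul_le_card_of_maps_to
      (fun _ _ ↦ Finset.mem_univ _) Finset.univ_nonempty ?_
    rw [Finset.card_univ, ZMod.card, nsmul_eq_mul, mul_div_cancel₀ _ (by positivity)]
  refine ⟨D.filter fun d : ℤ ↦ (d : ZMod M) = r, Finset.filter_subset _ _, ?_,
    fun d hd d' hd' hne ↦ ?_⟩
  · rw [div_le_iff₀' (by positivity)] at hr
    exact_mod_cast hr
  · have hcongr := (Finset.mem_filter.1 hd').2.trans (Finset.mem_filter.1 hd).2.symm
    exact Int.le_of_dvd (abs_pos.2 (sub_ne_zero.2 hne))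
      ((dvd_abs _ _).2 ((ZMod.intCast_eq_intCast_iff_dvd_sub _ _ _).1 hcongr))

/-- The numerators `z` of the points `z / u` of `K(q, B)` with denominator `u`. -/
def numerators (q : ℕ) (B : Set ℤ) (u : ℕ) : Set ℤ :=
  {z | (z : ℝ) / u ∈ expansionSet q B}

variable {q W : ℕ} {B : Set ℤ}

lemma ncard_prefixValues_le (hq : 1 < q) (hB : ∀ d ∈ B, |d| ≤ W * ((q : ℤ) - 1)) {n : ℕ}
    (hn : n ≠ 0) : ((prefixValues q B n).ncard : ℝ) ≤
      (2 * W + 1) * ((q : ℝ) ^ n) ^ (dimH (expansionSet q B)).toReal := by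
  have hqn : 1 < (q : ℝ) ^ n := one_lt_pow₀ (mod_cast hq) hn
  have hfin := finite_prefixValues hB n
  obtain ⟨E, hED, hcard, hsep⟩ := exists_separated_subset hfin.toFinset (2 * W).succ_pos
  have hEmem : (E : Set ℤ) ⊆ prefixValues q B n := fun d hd ↦ hfin.mem_toFinset.1 (hED hd)
  have hE : (E.card : ℝ) ≤ ((q : ℝ) ^ n) ^ (dimH (expansionSet ((q : ℝ) ^ n) E)).toReal :=
    card_le_rpow_dimH_expansionSet (R := W) hqn
      (fun d hd ↦ mod_cast abs_le_of_mem_prefixValues hB (hEmem hd))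
      (fun d hd d' hd' hne ↦ mod_cast hsep d hd d' hd' hne)
  have hdim : dimH (expansionSet ((q : ℝ) ^ n) E) ≤ dimH (expansionSet q B) :=
    dimH_mono ((expansionSet_mono _ hEmem).trans (expansionSet_prefixValues_subset hq hB hn))
  calc ((prefixValues q B n).ncard : ℝ) ≤ (2 * W + 1) * E.card := by
        rw [ncard_eq_toFinset_card _ hfin]
        exact_mod_cast hcard
    _ ≤ (2 * W + 1) * ((q : ℝ) ^ n) ^ (dimH (expansionSet q B)).toReal := by
        gcongr
        exact hE.trans (Real.rpow_le_rpow_of_exponent_le hqn.le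
          (ENNReal.toReal_mono (Real.dimH_ne_top _) hdim))

lemma numerators_subset_image (hq : 1 < q) (hB : ∀ d ∈ B, |d| ≤ W * ((q : ℤ) - 1)) {u n : ℕ}
    (hu : 0 < u) (hun : u ≤ q ^ n) :
    numerators q B u ⊆ (fun p : ℤ × ℤ ↦ ⌊u * (p.1 : ℝ) / q ^ n⌋ + p.2) ''
      prefixValues q B n ×ˢ Icc (-W : ℤ) W := by
  rintro z ⟨b, hb, hz⟩
  have hqn : (0 : ℝ) < (q : ℝ) ^ n := by positivity
  have htail : |(z : ℝ) - u * prefixValue q b n / q ^ n| ≤ W := by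
    have hrem := abs_expansion_le (β := q) (R := W) (b := fun i ↦ b (i + n)) (mod_cast hq)
      fun i ↦ mod_cast hB _ (hb (i + n))
    rw [expansion_tail_eq_sub_prefixValue hq (fun i ↦ hB _ (hb i)) n, hz] at hrem
    have hscale : (z : ℝ) - u * prefixValue q b n / q ^ n =
        u / q ^ n * ((q : ℝ) ^ n * (z / u) - prefixValue q b n) := by field_simp
    calc |(z : ℝ) - u * prefixValue q b n / q ^ n|
        = u / q ^ n * |(q : ℝ) ^ n * (z / u) - prefixValue q b n| := by
          rw [hscale, abs_mul, abs_of_nonneg (by positivity)]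
      _ ≤ 1 * W := by
          gcongr
          exact (div_le_one hqn).2 (mod_cast hun)
      _ = W := one_mul _
  set x : ℝ := u * prefixValue q b n / q ^ n
  obtain ⟨hlower, hupper⟩ := abs_le.1 htail
  refine ⟨(prefixValue q b n, z - ⌊x⌋), ⟨⟨b, hb, rfl⟩, ?_, ?_⟩, add_sub_cancel _ _⟩
  · have : (-W : ℝ) ≤ z - ⌊x⌋ := by linarith [Int.floor_le x]
    exact_mod_cast this
  · have : (z - ⌊x⌋ : ℝ) < W + 1 := by linarith [Int.lt_floor_add_one x]
    exact Int.lt_add_one_iff.1 (mod_cast this)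

lemma finite_numerators (hq : 1 < q) (hB : ∀ d ∈ B, |d| ≤ W * ((q : ℤ) - 1)) {u : ℕ}
    (hu : 0 < u) : (numerators q B u).Finite :=
  (((finite_prefixValues hB u).prod (finite_Icc _ _)).image _).subset
    (numerators_subset_image hq hB hu (Nat.lt_pow_self hq).le)

lemma ncard_numerators_le_mul_ncard_prefixValues (hq : 1 < q)
    (hB : ∀ d ∈ B, |d| ≤ W * ((q : ℤ) - 1)) {u n : ℕ} (hu : 0 < u) (hun : u ≤ q ^ n) :
    (numerators q B u).ncard ≤ (2 * W + 1) * (prefixValues q B n).ncard := by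
  have hfin := (finite_prefixValues hB n).prod (finite_Icc (-W : ℤ) W)
  calc (numerators q B u).ncard
      ≤ (prefixValues q B n ×ˢ Icc (-W : ℤ) W).ncard :=
        (ncard_le_ncard (numerators_subset_image hq hB hu hun) (hfin.image _)).trans
          (ncard_image_le hfin)
    _ = (2 * W + 1) * (prefixValues q B n).ncard := by
        rw [ncard_prod, ncard_eq_toFinset_card' (Icc (-W : ℤ) W), toFinset_Icc, Int.card_Icc,
          mul_comm]
        congr 1
        omega

lemma ncard_numerators_le (hq : 1 < q) (hB : ∀ d ∈ B, |d| ≤ W * ((q : ℤ) - 1)) {u : ℕ}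
    (hu : 0 < u) : ((numerators q B u).ncard : ℝ) ≤
      (2 * W + 1) ^ 2 * (q : ℝ) ^ (dimH (expansionSet q B)).toReal *
        (u : ℝ) ^ (dimH (expansionSet q B)).toReal := by
  let n := Nat.log q u + 1
  have hqn : (q : ℝ) ^ n ≤ q * u := by
    rw [pow_succ']
    gcongr
    exact_mod_cast Nat.pow_log_le_self q hu.ne'
  calc ((numerators q B u).ncard : ℝ) ≤ (2 * W + 1) * (prefixValues q B n).ncard :=
        mod_cast ncard_numerators_le_mul_ncard_prefixValues hq hB hu
          (Nat.lt_pow_succ_log_self hq u).le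
    _ ≤ (2 * W + 1) * ((2 * W + 1) * ((q : ℝ) * u) ^ (dimH (expansionSet q B)).toReal) := by
        gcongr
        refine (ncard_prefixValues_le hq hB (Nat.succ_ne_zero _)).trans ?_
        gcongr
    _ = _ := by
        rw [Real.mul_rpow (by positivity) (by positivity)]
        ring

end Counting

section Periodicity

/-- The walk `0, 1, 2, …` that returns to `i` instead of reaching `i + n`. -/
def loopIndex (i n : ℕ) : ℕ → ℕ
  | 0 => 0
  | k + 1 => if loopIndex i n k + 1 = i + n then i else loopIndex i n k + 1

lemma loopIndex_of_lt {i n k : ℕ} (hk : k < i + n) : loopIndex i n k = k := by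
  induction k with
  | zero => rfl
  | succ k ih => rw [loopIndex, ih (k.lt_succ_self.trans hk), if_neg hk.ne]

lemma loopIndex_add_period {i n : ℕ} (hn : 0 < n) {k : ℕ} (hk : i ≤ k) :
    loopIndex i n (k + n) = loopIndex i n k := by
  induction k, hk using Nat.le_induction with
  | base =>
    obtain ⟨m, rfl⟩ := Nat.exists_eq_add_one.2 hn
    rw [← add_assoc, loopIndex, loopIndex_of_lt (by omega), if_pos (add_assoc _ _ _),
      loopIndex_of_lt (by omega)]
  | succ k _ ih => rw [Nat.add_right_comm, loopIndex, loopIndex, ih]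

lemma expansion_comp_loopIndex {β R : ℝ} (hβ : 1 < β) {b : ℕ → ℝ}
    (hb : ∀ i, |b i| ≤ R * (β - 1)) {i n : ℕ}
    (hloop : expansion β (fun j ↦ b (j + i)) = expansion β (fun j ↦ b (j + (i + n)))) :
    expansion β (fun k ↦ b (loopIndex i n k)) = expansion β b := by
  refine HasSum.tsum_eq (hasSum_of_orbit (y := fun k ↦ expansion β fun j ↦ b (j + loopIndex i n k))
    hβ (fun k ↦ abs_expansion_le hβ fun j ↦ hb _) fun k ↦ ?_)
  rw [← expansion_tail_succ hβ hb, loopIndex]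
  split_ifs with hk
  · rw [hk, hloop]
  · rfl

lemma exists_map_add_eq_of_mem {α : Type*} {S : Set α} (hS : S.Finite) {f : ℕ → α}
    (hf : ∀ k, f k ∈ S) : ∃ i n, 0 < n ∧ n ≤ S.ncard ∧ f i = f (i + n) := by
  obtain ⟨i, hi, j, hj, hij, heq⟩ := exists_ne_map_eq_of_ncard_lt_of_maps_to
    (s := Iio (S.ncard + 1)) (by simp [ncard_eq_toFinset_card']) (fun k _ ↦ hf k) hS
  wlog hlt : i < j generalizing i j
  · exact this j hj i hi hij.symm heq.symm (by omega)
  rw [mem_Iio] at hj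
  exact ⟨i, j - i, by omega, by omega, by rwa [Nat.add_sub_cancel' hlt.le]⟩

variable {q W : ℕ} {B : Set ℤ}

lemma exists_mem_numerators_tail (hq : 1 < q) (hB : ∀ d ∈ B, |d| ≤ W * ((q : ℤ) - 1)) {u : ℕ}
    (hu : 0 < u) {b : ℕ → ℤ} (hb : ∀ i, b i ∈ B) {z : ℤ}
    (hz : expansion q (fun i ↦ b i) = z / u) (k : ℕ) :
    ∃ y ∈ numerators q B u, expansion q (fun i ↦ b (i + k)) = y / u := by
  suffices h : ∃ y : ℤ, expansion q (fun i ↦ b (i + k)) = y / u by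
    obtain ⟨y, hy⟩ := h
    exact ⟨y, ⟨fun i ↦ b (i + k), fun i ↦ hb _, hy⟩, hy⟩
  refine ⟨q ^ k * z - u * prefixValue q b k, ?_⟩
  rw [expansion_tail_eq_sub_prefixValue hq (fun i ↦ hB _ (hb i)), hz]
  push_cast
  field_simp

lemma exists_eventually_periodic_expansion (hq : 1 < q) (hB : ∀ d ∈ B, |d| ≤ W * ((q : ℤ) - 1))
    {u : ℕ} (hu : 0 < u) {z : ℤ} (hz : z ∈ numerators q B u) :
    ∃ (c : ℕ → ℤ) (i n : ℕ), (∀ k, c k ∈ B) ∧ expansion q (fun k ↦ c k) = z / u ∧ 0 < n ∧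
      n ≤ (numerators q B u).ncard ∧ ∀ k, i ≤ k → c (k + n) = c k := by
  obtain ⟨b, hb, hbz⟩ := hz
  choose y hy htail using exists_mem_numerators_tail hq hB hu hb hbz
  obtain ⟨i, n, hn, hcard, hloop⟩ := exists_map_add_eq_of_mem (finite_numerators hq hB hu) hy
  refine ⟨fun k ↦ b (loopIndex i n k), i, n, fun k ↦ hb _, ?_, hn, hcard, fun k hk ↦ ?_⟩
  · rw [← hbz]
    exact expansion_comp_loopIndex (R := W) (b := fun k ↦ b k) (mod_cast hq)
      (fun k ↦ mod_cast hB _ (hb k)) (by rw [htail, htail, hloop])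
  · exact congrArg b (loopIndex_add_period hn hk)

end Periodicity

section RationalDigits

/-- The integers `b` with `b / N ∈ A`: the digit set `N · A` when `N` is a common denominator
of `A`. -/
def scaledDigits (N : ℤ) (A : Finset ℚ) : Set ℤ :=
  {b | (b / N : ℚ) ∈ A}

variable {N : ℤ} {A : Finset ℚ}

lemma exists_common_denominator (A : Finset ℚ) :
    ∃ N : ℤ, N ≠ 0 ∧ ∀ a ∈ A, ∃ b : ℤ, (b : ℚ) = N * a := by
  obtain ⟨N, hN⟩ := IsLocalization.exist_integer_multiples_of_finset (nonZeroDivisors ℤ) A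
  exact ⟨N, nonZeroDivisors.coe_ne_zero N, fun a ha ↦ by
    simpa [IsLocalization.IsInteger, Submonoid.smul_def] using hN a ha⟩

lemma exists_bound_scaledDigits (hN : N ≠ 0) (A : Finset ℚ) :
    ∃ W : ℕ, ∀ d ∈ scaledDigits N A, |d| ≤ W := by
  obtain ⟨M, hM⟩ := (A.image fun a ↦ |(N : ℚ) * a|).exists_le
  refine ⟨⌈M⌉₊, fun d hd ↦ ?_⟩
  have hle := hM _ (Finset.mem_image_of_mem _ hd)
  rw [mul_div_cancel₀ _ (Int.cast_ne_zero.2 hN)] at hle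
  exact_mod_cast hle.trans (Nat.le_ceil M)

lemma expansionSet_scaledDigits (q : ℕ) (hN : N ≠ 0) (hA : ∀ a ∈ A, ∃ b : ℤ, (b : ℚ) = N * a) :
    expansionSet q (scaledDigits N A) = (fun x ↦ (N : ℝ) * x) '' Kset q A := by
  have hNQ : (N : ℚ) ≠ 0 := Int.cast_ne_zero.2 hN
  have hNR : (N : ℝ) ≠ 0 := Int.cast_ne_zero.2 hN
  ext x
  constructor
  · rintro ⟨b, hb, rfl⟩
    refine ⟨_, ⟨fun i ↦ b i / N, hb, rfl⟩, ?_⟩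
    refine (expansion_const_mul _ _ _).symm.trans ?_
    push_cast
    simp only [mul_div_cancel₀ _ hNR]
  · rintro ⟨_, ⟨a, ha, rfl⟩, rfl⟩
    choose b hb using fun i ↦ hA (a i) (ha i)
    have hbR : ∀ i, (b i : ℝ) = N * a i := fun i ↦ mod_cast congrArg (Rat.cast (K := ℝ)) (hb i)
    refine ⟨b, fun i ↦ ?_, ?_⟩
    · rw [scaledDigits, mem_ofPred_eq, hb, mul_div_cancel_left₀ _ hNQ]
      exact ha i
    · simp only [hbR]
      exact expansion_const_mul _ _ _

lemma dimH_expansionSet_scaledDigits (q : ℕ) (hN : N ≠ 0)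
    (hA : ∀ a ∈ A, ∃ b : ℤ, (b : ℚ) = N * a) :
    dimH (expansionSet q (scaledDigits N A)) = dimH (Kset q A) := by
  rw [expansionSet_scaledDigits q hN hA]
  exact (ContinuousLinearEquiv.smulLeft (M₁ := ℝ) (R₁ := ℝ)
    (Units.mk0 (N : ℝ) (Int.cast_ne_zero.2 hN))).dimH_image _

end RationalDigits

end DigitExpansion

open DigitExpansion in
theorem eventually_periodic_coding_general (q : ℕ) (hq : 2 ≤ q) (A : Finset ℚ) :
    ∃ c₁ : ℝ, 0 < c₁ ∧
      ∀ (u : ℕ) (v : ℤ), 0 < u → ((v : ℝ) / (u : ℝ)) ∈ Kset q A →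
        ∃ (a : ℕ → ℚ) (jj : ℕ) (n : ℕ),
          (∀ i, a i ∈ A) ∧
          (v : ℝ) / (u : ℝ) = ∑' i : ℕ, (a i : ℝ) / (q : ℝ) ^ (i + 1) ∧
          1 ≤ n ∧ (n : ℝ) ≤ c₁ * (u : ℝ) ^ (dimH (Kset q A)).toReal ∧
          ∀ i, jj ≤ i → a (i + n) = a i := by
  obtain ⟨N, hN, hNA⟩ := exists_common_denominator A
  obtain ⟨W, hW⟩ := exists_bound_scaledDigits hN A
  have hB : ∀ d ∈ scaledDigits N A, |d| ≤ W * ((q : ℤ) - 1) := fun d hd ↦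
    (hW d hd).trans (le_mul_of_one_le_right (by positivity) (by omega))
  refine ⟨(2 * W + 1) ^ 2 * (q : ℝ) ^ (dimH (Kset q A)).toReal, by positivity,
    fun u v hu hv ↦ ?_⟩
  have hz : N * v ∈ numerators q (scaledDigits N A) u := by
    rw [numerators, mem_ofPred_eq, expansionSet_scaledDigits q hN hNA]
    exact ⟨v / u, hv, by push_cast; ring⟩
  obtain ⟨c, i, n, hc, hsum, hn, hcard, hper⟩ := exists_eventually_periodic_expansion hq hB hu hz
  have hcount := ncard_numerators_le hq hB hu
  rw [dimH_expansionSet_scaledDigits q hN hNA] at hcount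
  refine ⟨fun k ↦ c k / N, i, n, hc, ?_, hn, (Nat.cast_le.2 hcard).trans hcount,
    fun k hk ↦ by simp only [hper k hk]⟩
  have hNR : (N : ℝ) ≠ 0 := Int.cast_ne_zero.2 hN
  calc (v : ℝ) / u = (N : ℝ)⁻¹ * expansion q (fun k ↦ c k) := by
        rw [hsum]; push_cast; field_simp
    _ = expansion q (fun k ↦ ((c k / N : ℚ) : ℝ)) := by
        rw [← expansion_const_mul]; push_cast; simp only [div_eq_inv_mul]

/-- Every rational `v/u ∈ K(q,A)` (in lowest terms) admits an eventually periodic coding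
with period length at most `c₁ · u^s`, where `s = dim_H K(q,A) < 1`. -/
theorem eventually_periodic_coding (q : ℕ) (hq : 3 ≤ q) (A : Finset ℚ) (hA : 2 ≤ A.card)
    (hdim : dimH (Kset q A) < 1) :
    ∃ c₁ : ℝ, 0 < c₁ ∧
      ∀ (u : ℕ) (v : ℤ), 0 < u → Int.gcd v (u : ℤ) = 1 →
        ((v : ℝ) / (u : ℝ)) ∈ Kset q A →
        ∃ (a : ℕ → ℚ) (jj : ℕ) (n : ℕ),
          (∀ i, a i ∈ A) ∧
          (v : ℝ) / (u : ℝ) = ∑' i : ℕ, (a i : ℝ) / (q : ℝ) ^ (i + 1) ∧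
          1 ≤ n ∧ (n : ℝ) ≤ c₁ * (u : ℝ) ^ (dimH (Kset q A)).toReal ∧
          ∀ i, jj ≤ i → a (i + n) = a i := by
  obtain ⟨c₁, hc₁, h⟩ := eventually_periodic_coding_general q (by omega) A
  exact ⟨c₁, hc₁, fun u v hu _ ↦ h u v hu⟩
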